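/- arXiv:2601.09502 — 2 statements merged into one kernel-verified Lean document; each statement's English description precedes it below -/
import Mathlib

section
/- Fix x₀ ∈ ℝ³ and set m(x) = x − x₀. Let μ : ℝ³ → Matrix (Fin 3) (Fin 3) ℝ be differentiable at a point x ∈ ℝ³, with μ(y) symmetric and positive definite for every y ∈ ℝ³, and let η > 0. If the symmetric matrix μ(x) + (fderiv ℝ μ x)(m(x)) − η • μ(x) is positive semidefinite, then the matrix μ(x)⁻¹ − (fderiv ℝ (fun y ↦ (μ y)⁻¹) x)(m(x)) − η • μ(x)⁻¹ is also positive semidefinite. -/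
open Matrix

section LinftyOpNorm

attribute [local instance] Matrix.linftyOpNormedRing Matrix.linftyOpNormedAlgebra

/-- Matrix inversion is differentiable at an invertible matrix `A`, with derivative
`H ↦ -A⁻¹ H A⁻¹`, for the `L∞` operator norm. -/
theorem Matrix.hasFDerivAt_inv_linftyOp {n : Type*} [Fintype n] [DecidableEq n]
    {A : Matrix n n ℝ} (hA : IsUnit A) :
    HasFDerivAt (fun B : Matrix n n ℝ => B⁻¹)
      (-ContinuousLinearMap.mulLeftRight ℝ (Matrix n n ℝ) A⁻¹ A⁻¹) A := by
  obtain ⟨u, rfl⟩ := hA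
  simpa only [Matrix.nonsing_inv_eq_ringInverse, Ring.inverse_unit] using
    hasFDerivAt_ringInverse (𝕜 := ℝ) u

end LinftyOpNorm

attribute [local instance] Matrix.normedAddCommGroup Matrix.normedSpace

/-- Matrix inversion is differentiable at an invertible matrix `A`, with derivative
`H ↦ -A⁻¹ H A⁻¹`, for the entrywise sup norm. -/
theorem Matrix.exists_hasFDerivAt_inv {n : Type*} [Fintype n] [DecidableEq n]
    {A : Matrix n n ℝ} (hA : IsUnit A) :
    ∃ L : Matrix n n ℝ →L[ℝ] Matrix n n ℝ,
      HasFDerivAt (fun B : Matrix n n ℝ => B⁻¹) L A ∧ ∀ H, L H = -(A⁻¹ * H * A⁻¹) :=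
  ⟨_, Matrix.hasFDerivAt_inv_linftyOp hA, fun _ => rfl⟩

/-- The pointwise non-trapping condition `μ + (m·∇)μ ≥ η μ` implies
`μ⁻¹ − (m·∇)μ⁻¹ ≥ η μ⁻¹`. -/
theorem stmt_1 (x₀ x : Fin 3 → ℝ)
    (μ : (Fin 3 → ℝ) → Matrix (Fin 3) (Fin 3) ℝ)
    (hdiff : DifferentiableAt ℝ μ x)
    (hsymm : ∀ y, (μ y).IsSymm) (hpos : ∀ y, (μ y).PosDef)
    (η : ℝ) (hη : 0 < η)
    (h : (μ x + fderiv ℝ μ x (x - x₀) - η • μ x).PosSemidef) :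
    ((μ x)⁻¹ - fderiv ℝ (fun y => (μ y)⁻¹) x (x - x₀) - η • (μ x)⁻¹).PosSemidef := by
  have hunit : IsUnit (μ x) := (hpos x).isUnit
  obtain ⟨L, hL, hL_apply⟩ := Matrix.exists_hasFDerivAt_inv hunit
  have hderiv : fderiv ℝ (fun y => (μ y)⁻¹) x (x - x₀) =
      -((μ x)⁻¹ * fderiv ℝ μ x (x - x₀) * (μ x)⁻¹) := by
    have hcomp : HasFDerivAt (fun y => (μ y)⁻¹) (L.comp (fderiv ℝ μ x)) x :=
      hL.comp x hdiff.hasFDerivAt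
    rw [hcomp.fderiv, ContinuousLinearMap.comp_apply, hL_apply]
  have hinv : (μ x)⁻¹ * μ x = 1 :=
    Matrix.nonsing_inv_mul _ ((Matrix.isUnit_iff_isUnit_det _).mp hunit)
  have hcongr := h.mul_mul_conjTranspose_same (μ x)⁻¹
  rw [(hpos x).inv.isHermitian.eq] at hcongr
  convert hcongr using 1
  rw [hderiv]
  simp only [mul_sub, mul_add, sub_mul, add_mul, mul_smul_comm, smul_mul_assoc, hinv, one_mul,
    sub_neg_eq_add]
end

section
/- Let ε, σ : ℝ³ → ℝ be continuously differentiable with ε(x) ≠ 0 for all x ∈ ℝ³, and let E, H : ℝ × ℝ³ → ℝ³ be twice continuously differentiable. Assume that for all (t, x) ∈ ℝ × ℝ³, ∂ₜ(ε(x) • E(t,x)) = curl (H(t, ·)) (x) − σ(x) • E(t,x). Define ρ(t,x) := div (fun y ↦ ε(y) • E(t,y)) (x). Then for all (t, x) ∈ ℝ × ℝ³, ∂ₜρ(t,x) = −(σ(x)/ε(x)) · ρ(t,x) − ∇(σ/ε)(x) · (ε(x) • E(t,x)). -/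
open Matrix

/-- Divergence of a vector field on ℝ³. -/
noncomputable def vdiv (F : (Fin 3 → ℝ) → (Fin 3 → ℝ)) (x : Fin 3 → ℝ) : ℝ :=
  fderiv ℝ F x (Pi.single 0 1) 0 + fderiv ℝ F x (Pi.single 1 1) 1 +
    fderiv ℝ F x (Pi.single 2 1) 2

/-- Curl of a vector field on ℝ³. -/
noncomputable def vcurl (F : (Fin 3 → ℝ) → (Fin 3 → ℝ)) (x : Fin 3 → ℝ) : Fin 3 → ℝ :=
  ![fderiv ℝ F x (Pi.single 1 1) 2 - fderiv ℝ F x (Pi.single 2 1) 1,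
    fderiv ℝ F x (Pi.single 2 1) 0 - fderiv ℝ F x (Pi.single 0 1) 2,
    fderiv ℝ F x (Pi.single 0 1) 1 - fderiv ℝ F x (Pi.single 1 1) 0]

/-- Gradient of a scalar function on ℝ³. -/
noncomputable def vgrad (f : (Fin 3 → ℝ) → ℝ) (x : Fin 3 → ℝ) : Fin 3 → ℝ :=
  fun i => fderiv ℝ f x (Pi.single i 1)

/-- Second derivatives of a `C²` map commute. -/
theorem fderiv_fderiv_apply_comm {V W : Type*} [NormedAddCommGroup V] [NormedSpace ℝ V]
    [NormedAddCommGroup W] [NormedSpace ℝ W] {G : V → W} (hG : ContDiff ℝ 2 G) (q u w : V) :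
    fderiv ℝ (fun p => fderiv ℝ G p u) q w = fderiv ℝ (fun p => fderiv ℝ G p w) q u := by
  have hd : DifferentiableAt ℝ (fderiv ℝ G) q :=
    (hG.fderiv_right (m := 1) (by norm_num)).differentiable (by norm_num) q
  have key : ∀ a b : V, fderiv ℝ (fun p => fderiv ℝ G p a) q b = fderiv ℝ (fderiv ℝ G) q b a := by
    intro a b
    rw [fderiv_clm_apply hd (differentiableAt_const a)]
    simp
  rw [key, key]
  exact (hG.contDiffAt.isSymmSndFDerivAt (by simp)).eq w u

theorem ContDiff.differentiable_fderiv_apply {V W : Type*} [NormedAddCommGroup V]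
    [NormedSpace ℝ V] [NormedAddCommGroup W] [NormedSpace ℝ W] {G : V → W}
    (hG : ContDiff ℝ 2 G) (u : V) : Differentiable ℝ (fun p => fderiv ℝ G p u) :=
  ((hG.fderiv_right (m := 1) (by norm_num)).differentiable (by norm_num)).clm_apply
    (differentiable_const u)

section Slices

variable {V W : Type*} [NormedAddCommGroup V] [NormedSpace ℝ V]
  [NormedAddCommGroup W] [NormedSpace ℝ W] {G : ℝ × V → W}

theorem hasFDerivAt_slice_right {t : ℝ} {x : V} (hG : DifferentiableAt ℝ G (t, x)) :
    HasFDerivAt (fun y => G (t, y)) ((fderiv ℝ G (t, x)).comp (.inr ℝ ℝ V)) x :=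
  hG.hasFDerivAt.comp x (hasFDerivAt_prodMk_right t x)

theorem hasDerivAt_slice_left {t : ℝ} {x : V} (hG : DifferentiableAt ℝ G (t, x)) :
    HasDerivAt (fun τ => G (τ, x)) (fderiv ℝ G (t, x) (1, 0)) t := by
  simpa [Function.comp_def] using (hG.hasFDerivAt.comp t (hasFDerivAt_prodMk_left t x)).hasDerivAt

theorem fderiv_slice_right_apply {t : ℝ} {x : V} (hG : DifferentiableAt ℝ G (t, x)) (v : V) :
    fderiv ℝ (fun y => G (t, y)) x v = fderiv ℝ G (t, x) (0, v) := by
  rw [(hasFDerivAt_slice_right hG).fderiv]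
  simp

/-- Time and space derivatives of a `C²` map commute. -/
theorem hasDerivAt_fderiv_slice (hG : ContDiff ℝ 2 G) (t : ℝ) (x v : V) :
    HasDerivAt (fun τ => fderiv ℝ (fun y => G (τ, y)) x v)
      (fderiv ℝ (fun y => fderiv ℝ G (t, y) (1, 0)) x v) t := by
  have hd : Differentiable ℝ G := hG.differentiable (by norm_num)
  simp only [fderiv_slice_right_apply (hd _)]
  rw [fderiv_slice_right_apply (G := fun p => fderiv ℝ G p (1, 0))
    (hG.differentiable_fderiv_apply (1, 0) _), fderiv_fderiv_apply_comm hG]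
  exact hasDerivAt_slice_left (G := fun p => fderiv ℝ G p (0, v))
    (hG.differentiable_fderiv_apply (0, v) _)

end Slices

theorem vdiv_smul {f : (Fin 3 → ℝ) → ℝ} {F : (Fin 3 → ℝ) → (Fin 3 → ℝ)} {x : Fin 3 → ℝ}
    (hf : DifferentiableAt ℝ f x) (hF : DifferentiableAt ℝ F x) :
    vdiv (fun y => f y • F y) x = f x * vdiv F x + vgrad f x ⬝ᵥ F x := by
  simp only [vdiv, vgrad, fderiv_fun_smul hf hF, dotProduct, Fin.sum_univ_three]
  simp
  ring

theorem vdiv_sub {F G : (Fin 3 → ℝ) → (Fin 3 → ℝ)} {x : Fin 3 → ℝ}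
    (hF : DifferentiableAt ℝ F x) (hG : DifferentiableAt ℝ G x) :
    vdiv (fun y => F y - G y) x = vdiv F x - vdiv G x := by
  simp only [vdiv, fderiv_fun_sub hF hG]
  simp
  ring

theorem differentiable_vcurl {F : (Fin 3 → ℝ) → (Fin 3 → ℝ)} (hF : ContDiff ℝ 2 F) :
    Differentiable ℝ (vcurl F) := by
  have h : ∀ (u : Fin 3 → ℝ) (i : Fin 3), Differentiable ℝ (fun y => fderiv ℝ F y u i) :=
    fun u => differentiable_pi.1 (hF.differentiable_fderiv_apply u)
  refine differentiable_pi.2 fun i => ?_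
  fin_cases i <;> exact (h _ _).sub (h _ _)

theorem vdiv_vcurl {F : (Fin 3 → ℝ) → (Fin 3 → ℝ)} (hF : ContDiff ℝ 2 F) (x : Fin 3 → ℝ) :
    vdiv (vcurl F) x = 0 := by
  have hd := fun u => hF.differentiable_fderiv_apply u x
  have happ : ∀ {K : (Fin 3 → ℝ) → (Fin 3 → ℝ)}, DifferentiableAt ℝ K x → ∀ v i,
      fderiv ℝ K x v i = fderiv ℝ (fun y => K y i) x v := fun hK v i => by
    rw [fderiv_apply hK]
    rfl
  have hcomp : ∀ u (i : Fin 3), DifferentiableAt ℝ (fun y => fderiv ℝ F y u i) x :=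
    fun u => differentiableAt_pi.1 (hd u)
  have hc := differentiable_vcurl hF x
  have hcomm : ∀ (u w : Fin 3 → ℝ) (i : Fin 3), fderiv ℝ (fun y => fderiv ℝ F y u i) x w =
      fderiv ℝ (fun y => fderiv ℝ F y w i) x u := fun u w i => by
    rw [← happ (hd u), ← happ (hd w), fderiv_fderiv_apply_comm hF]
  simp only [vdiv, happ hc]
  simp only [vcurl, Matrix.cons_val]
  simp only [fderiv_fun_sub (hcomp _ _) (hcomp _ _), _root_.sub_apply]
  rw [hcomm (Pi.single 1 1) (Pi.single 0 1), hcomm (Pi.single 2 1) (Pi.single 0 1),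
    hcomm (Pi.single 2 1) (Pi.single 1 1)]
  ring

/-- Scalar ODE for the charge density `ρ = div(εE)` in the isotropic case:
`∂ₜρ = −(σ/ε) ρ − ∇(σ/ε) · (εE)`. -/
theorem stmt_9 (ε σ : (Fin 3 → ℝ) → ℝ)
    (hε : ContDiff ℝ 1 ε) (hσ : ContDiff ℝ 1 σ)
    (hε0 : ∀ x, ε x ≠ 0)
    (E H : ℝ × (Fin 3 → ℝ) → (Fin 3 → ℝ))
    (hE : ContDiff ℝ 2 E) (hH : ContDiff ℝ 2 H)
    (ampere : ∀ t x, deriv (fun τ => ε x • E (τ, x)) t =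
      vcurl (fun y => H (t, y)) x - σ x • E (t, x))
    (ρ : ℝ → (Fin 3 → ℝ) → ℝ)
    (hρ : ∀ t x, ρ t x = vdiv (fun y => ε y • E (t, y)) x) :
    ∀ t x, deriv (fun τ => ρ τ x) t =
      -(σ x / ε x) * ρ t x
        - vgrad (fun y => σ y / ε y) x ⬝ᵥ (ε x • E (t, x)) := by
  intro t x
  have hEd : Differentiable ℝ E := hE.differentiable (by norm_num)
  have hεd : Differentiable ℝ ε := hε.differentiable (by norm_num)
  have hσd : Differentiable ℝ σ := hσ.differentiable (by norm_num)
  have hEs : ∀ τ, Differentiable ℝ (fun y => E (τ, y)) :=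
    fun τ y => (hasFDerivAt_slice_right (hEd (τ, y))).differentiableAt
  have hHs : ContDiff ℝ 2 (fun y => H (t, y)) := by fun_prop
  have hEt : ∀ y, HasDerivAt (fun τ => E (τ, y)) (fderiv ℝ E (t, y) (1, 0)) t :=
    fun y => hasDerivAt_slice_left (hEd (t, y))
  have hEtd : Differentiable ℝ (fun y => fderiv ℝ E (t, y) (1, 0)) := fun y =>
    (hasFDerivAt_slice_right (hE.differentiable_fderiv_apply (1, 0) (t, y))).differentiableAt
  have hdiv : HasDerivAt (fun τ => vdiv (fun y => E (τ, y)) x)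
      (vdiv (fun y => fderiv ℝ E (t, y) (1, 0)) x) t := by
    have h := fun v => hasDerivAt_pi.1 (hasDerivAt_fderiv_slice hE t x v)
    exact ((h _ 0).add (h _ 1)).add (h _ 2)
  have hdot : HasDerivAt (fun τ => vgrad ε x ⬝ᵥ E (τ, x))
      (vgrad ε x ⬝ᵥ fderiv ℝ E (t, x) (1, 0)) t :=
    HasDerivAt.fun_sum fun i _ => (hasDerivAt_pi.1 (hEt x) i).const_mul _
  have hlhs : deriv (fun τ => ρ τ x) t = vdiv (fun y => ε y • fderiv ℝ E (t, y) (1, 0)) x := by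
    simp only [hρ, vdiv_smul (hεd x) (hEs _ x), vdiv_smul (hεd x) (hEtd x)]
    exact ((hdiv.const_mul (ε x)).add hdot).deriv
  have hamp : (fun y => ε y • fderiv ℝ E (t, y) (1, 0)) =
      fun y => vcurl (fun z => H (t, z)) y - σ y • E (t, y) := by
    funext y
    rw [← ampere t y, ((hEt y).fun_const_smul (ε y)).deriv]
  have hσE : (fun y => σ y • E (t, y)) = fun y => (σ y / ε y) • (ε y • E (t, y)) := by
    funext y
    rw [smul_smul, div_mul_cancel₀ _ (hε0 y)]
  have hquot : DifferentiableAt ℝ (fun y => σ y / ε y) x := by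
    simpa only [div_eq_mul_inv] using (hσd x).fun_mul ((hεd x).fun_inv (hε0 x))
  rw [hlhs, hamp, vdiv_sub (differentiable_vcurl hHs x) ((hσd x).fun_smul (hEs t x)),
    vdiv_vcurl hHs, hσE, vdiv_smul hquot ((hεd x).fun_smul (hEs t x)), hρ]
  ring
end
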